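/- Let Γ be an alphabet with a distinguished blank symbol (blank = default), Q a type of states, and T : Turing.Tape Γ a tape. Suppose two transition rules with the same left-hand side, (q, T.head) → (q₁, w₁, d₁) and (q, T.head) → (q₂, w₂, d₂) (with qᵢ : Q, wᵢ : Γ, dᵢ a direction or stay), produce the same next configuration: q₁ = q₂ and the tape obtained by writing w₁ then moving d₁ equals the tape obtained by writing w₂ then moving d₂. If it is not the case that T's left half-tape is entirely blank, T's right half-tape is entirely blank, and w₁ = default, then the two rules are identical: q₁ = q₂, w₁ = w₂, and d₁ = d₂. -/

import Mathlib

/-- Apply an optional move direction to a tape: `none` means "stay" (no move). -/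
def moveOpt {Γ : Type*} [Inhabited Γ] (d : Option Turing.Dir) (T : Turing.Tape Γ) :
    Turing.Tape Γ :=
  match d with
  | none => T
  | some d => Turing.Tape.move d T

open Turing in
theorem nth_default_aux {Γ : Type*} [Inhabited Γ] (n : ℕ) :
    (default : ListBlank Γ).nth n = default := by
  change (ListBlank.mk ([] : List Γ)).nth n = default
  simp

open Turing in
theorem eq_default_of_tail_tail {Γ : Type*} [Inhabited Γ] (l : ListBlank Γ)
    (h : l.tail.tail = l) : l = default := by
  have hper : ∀ n, l.nth (n + 2) = l.nth n := by
    intro n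
    rw [ListBlank.nth_succ, ListBlank.nth_succ, h]
  have hper' : ∀ k n, l.nth (n + 2 * k) = l.nth n := by
    intro k
    induction k with
    | zero => intro n; rfl
    | succ k ih =>
      intro n
      rw [show n + 2 * (k + 1) = (n + 2 * k) + 2 by ring, hper, ih]
  have hev : ∃ N, ∀ n, N ≤ n → l.nth n = default := by
    refine ListBlank.induction_on l fun a => ⟨a.length, fun n hn => ?_⟩
    rw [ListBlank.nth_mk, List.getI_eq_default _ hn]
  obtain ⟨N, hN⟩ := hev
  apply ListBlank.ext
  intro n
  rw [nth_default_aux, ← hper' N n]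
  exact hN _ (by omega)

open Turing in
theorem eq_default_of_tail {Γ : Type*} [Inhabited Γ] (l : ListBlank Γ)
    (h : l.tail = l) : l = default :=
  eq_default_of_tail_tail l (by rw [h, h])

open Turing in
theorem head_default_aux {Γ : Type*} [Inhabited Γ] :
    (default : ListBlank Γ).head = default := rfl

open Turing in
theorem eq_default_of_cons {Γ : Type*} [Inhabited Γ] (w : Γ) (l : ListBlank Γ)
    (h : l.cons w = l) : l = default ∧ w = default := by
  have h1 : l = default := eq_default_of_tail l (by
    have := congrArg ListBlank.tail h
    rw [ListBlank.tail_cons] at this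
    exact this.symm)
  refine ⟨h1, ?_⟩
  have := congrArg ListBlank.head h
  rw [ListBlank.head_cons, h1] at this
  exact this

open Turing in
theorem eq_default_of_cons_tail {Γ : Type*} [Inhabited Γ] (w : Γ) (l : ListBlank Γ)
    (h : l.cons w = l.tail) : l = default ∧ w = default := by
  have h1 : l = default := eq_default_of_tail_tail l (by
    rw [← h, ListBlank.tail_cons])
  refine ⟨h1, ?_⟩
  have := congrArg ListBlank.head h
  rw [ListBlank.head_cons, h1] at this
  exact this

/-- Lemma 1 of the paper: if two transition rules `(q, T.head) → (qᵢ, wᵢ, dᵢ)` produce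
the same next configuration (same state and same tape), and the trivial blank case
(`T.left`, `T.right` all blank and `w₁` blank) does not hold, then the two rules are
identical. -/
theorem rule_unique {Γ Q : Type*} [Inhabited Γ] (T : Turing.Tape Γ)
    (q q₁ q₂ : Q) (w₁ w₂ : Γ) (d₁ d₂ : Option Turing.Dir)
    (hq : q₁ = q₂)
    (ht : moveOpt d₁ (T.write w₁) = moveOpt d₂ (T.write w₂))
    (hnontriv : ¬ (T.left = default ∧ T.right = default ∧ w₁ = default)) :
    q₁ = q₂ ∧ w₁ = w₂ ∧ d₁ = d₂ := by
  refine ⟨hq, ?_⟩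
  obtain ⟨a, L, R⟩ := T
  rcases d₁ with _ | (_ | _) <;> rcases d₂ with _ | (_ | _) <;>
    simp only [moveOpt, Turing.Tape.write, Turing.Tape.move, Turing.Tape.mk.injEq] at ht hnontriv <;>
    obtain ⟨h1, h2, h3⟩ := ht
  · exact ⟨h1, rfl⟩
  · have hL := eq_default_of_tail L h2.symm
    have hR := eq_default_of_cons _ R h3.symm
    exact absurd ⟨hL, hR.1, by rw [h1, hL]; rfl⟩ hnontriv
  · have hR := eq_default_of_tail R h3.symm
    have hL := eq_default_of_cons _ L h2.symm
    exact absurd ⟨hL.1, hR, by rw [h1, hR]; rfl⟩ hnontriv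
  · have hL := eq_default_of_tail L h2
    have hR := eq_default_of_cons _ R h3
    exact absurd ⟨hL, hR⟩ hnontriv
  · have := congrArg Turing.ListBlank.head h3
    rw [Turing.ListBlank.head_cons, Turing.ListBlank.head_cons] at this
    exact ⟨this, rfl⟩
  · have hR := eq_default_of_cons_tail _ R h3
    have hL := eq_default_of_cons_tail _ L h2.symm
    exact absurd ⟨hL.1, hR⟩ hnontriv
  · have hR := eq_default_of_tail R h3
    have hL := eq_default_of_cons _ L h2
    exact absurd ⟨hL.1, hR, hL.2⟩ hnontriv
  · have hR := eq_default_of_cons_tail _ R h3.symm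
    have hL := eq_default_of_cons_tail _ L h2
    exact absurd ⟨hL.1, hR.1, hL.2⟩ hnontriv
  · have := congrArg Turing.ListBlank.head h2
    rw [Turing.ListBlank.head_cons, Turing.ListBlank.head_cons] at this
    exact ⟨this, rfl⟩
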